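/- (Yang–Barron KL bound) Let P and Q be probability measures with densities p, q relative to a common measure μ, with p ≪ q, and let L(z) := log(p(z)/q(z)). Then E_{Z∼P}[max{L(Z), 0}] ≤ KL(P‖Q) + √(2 KL(P‖Q)). -/

import Mathlib

open MeasureTheory Real

/-- A quadratic lower bound for `InformationTheory.klFun` in terms of the negative part of
`x * log x`. -/
lemma sq_mul_max_neg_log_le_two_mul_klFun {x : ℝ} (hx : 0 ≤ x) :
    (x * max (-Real.log x) 0) ^ 2 ≤ 2 * InformationTheory.klFun x := by
  rcases hx.eq_or_lt with rfl | hx0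
  · simp [InformationTheory.klFun]
  rcases le_total 1 x with h1 | h1
  · rw [max_eq_right (by linarith [Real.log_nonneg h1])]
    simpa using InformationTheory.klFun_nonneg hx
  · have hlog : Real.log x ≤ 0 := Real.log_nonpos hx h1
    rw [max_eq_left (by linarith), InformationTheory.klFun]
    have hsinh : (x - x⁻¹) / 2 ≤ Real.log x := by
      rw [← Real.sinh_log hx0]
      exact Real.sinh_le_self_iff.2 hlog
    have hquad : (x ^ 2 - 1) / 2 ≤ x * Real.log x := by
      calc (x ^ 2 - 1) / 2 = x * ((x - x⁻¹) / 2) := by field_simp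
        _ ≤ x * Real.log x := by gcongr
    have hlin : x * -Real.log x ≤ 1 - x := by
      have := mul_le_mul_of_nonneg_left (Real.one_sub_inv_le_log_of_pos hx0) hx
      rw [mul_sub, mul_inv_cancel₀ hx0.ne'] at this
      linarith
    have hnonneg : 0 ≤ x * -Real.log x := mul_nonneg hx (by linarith)
    nlinarith [pow_le_pow_left₀ hnonneg hlin 2]

/-- The expectation of the negative part of the log-likelihood ratio is at most the square root
of twice the Kullback-Leibler divergence. -/
lemma integral_max_neg_llr_le_sqrt {Z : Type*} [MeasurableSpace Z] (P Q : Measure Z)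
    [IsProbabilityMeasure P] [IsProbabilityMeasure Q] (hac : P ≪ Q)
    (hint : Integrable (llr P Q) P) :
    ∫ z, max (-llr P Q z) 0 ∂P ≤ Real.sqrt (2 * ∫ z, llr P Q z ∂P) := by
  have hneg : Integrable (fun z => max (-llr P Q z) 0) P := hint.neg_part
  have hfun : Integrable (fun z => (P.rnDeriv Q z).toReal * max (-llr P Q z) 0) Q :=
    (integrable_rnDeriv_smul_iff hac).2 hneg
  have hchange : ∫ z, (P.rnDeriv Q z).toReal * max (-llr P Q z) 0 ∂Q
      = ∫ z, max (-llr P Q z) 0 ∂P := integral_rnDeriv_smul hac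
  have hkl : Integrable (fun z => InformationTheory.klFun (P.rnDeriv Q z).toReal) Q :=
    (InformationTheory.integrable_klFun_rnDeriv_iff hac).2 hint
  have hklint : ∫ z, InformationTheory.klFun (P.rnDeriv Q z).toReal ∂Q = ∫ z, llr P Q z ∂P := by
    simp [InformationTheory.integral_klFun_rnDeriv hac hint]
  set t := ∫ z, max (-llr P Q z) 0 ∂P
  have hmono : ∫ z, 2 * t * ((P.rnDeriv Q z).toReal * max (-llr P Q z) 0) ∂Q
      ≤ ∫ z, (2 * InformationTheory.klFun (P.rnDeriv Q z).toReal + t ^ 2) ∂Q := by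
    refine integral_mono (hfun.const_mul _) ((hkl.const_mul 2).add (integrable_const _))
      fun z => ?_
    have hsq := sq_mul_max_neg_log_le_two_mul_klFun (x := (P.rnDeriv Q z).toReal)
      ENNReal.toReal_nonneg
    simp only [llr]
    nlinarith [two_mul_le_add_sq t ((P.rnDeriv Q z).toReal *
      max (-Real.log (P.rnDeriv Q z).toReal) 0)]
  rw [integral_const_mul, hchange, integral_add (hkl.const_mul 2) (integrable_const _),
    integral_const_mul, hklint, integral_const, probReal_univ, one_smul] at hmono
  exact Real.le_sqrt_of_sq_le (by nlinarith)

/-- Yang–Barron KL bound: for probability measures `P ≪ Q` with log-density ratio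
`L(z) = log (dP/dQ)(z)` and finite KL divergence `D = E_P[L]`:
`E_P[max{L, 0}] ≤ D + √(2D)`. -/
theorem yang_barron_kl_bound
    {Z : Type*} [MeasurableSpace Z] (P Q : Measure Z)
    [IsProbabilityMeasure P] [IsProbabilityMeasure Q] (hac : P ≪ Q)
    (hint : Integrable (fun z => Real.log ((P.rnDeriv Q z).toReal)) P) :
    ∫ z, max (Real.log ((P.rnDeriv Q z).toReal)) 0 ∂P
      ≤ (∫ z, Real.log ((P.rnDeriv Q z).toReal) ∂P)
        + Real.sqrt (2 * ∫ z, Real.log ((P.rnDeriv Q z).toReal) ∂P) := by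
  have hsplit : ∀ z, max (Real.log ((P.rnDeriv Q z).toReal)) 0
      = Real.log ((P.rnDeriv Q z).toReal) + max (-Real.log ((P.rnDeriv Q z).toReal)) 0 := by
    intro z
    rw [← max_add_add_left, add_neg_cancel, add_zero, max_comm]
  simp_rw [hsplit]
  rw [integral_add hint hint.neg_part]
  gcongr
  exact integral_max_neg_llr_le_sqrt P Q hac hint
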